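/- Let r > 0, α > 1, γ = (α−1)/r and c̄ > 0. Then for every λ ≥ c̄ and every y ∈ ℕ, the derivative of the log beta negative binomial pmf with respect to λ is uniformly bounded: γ·(ψ(γλ+y+α+r) − ψ(γλ+y) + ψ(γλ+α) − ψ(γλ)) ≤ (2α+2+r)/c̄, and this quantity is nonnegative; in particular |(d/dλ) log p(y; λ, r, α)| ≤ (2α+2+r)/c̄. -/

import Mathlib

noncomputable def betaFn (a b : ℝ) : ℝ := Real.Gamma a * Real.Gamma b / Real.Gamma (a + b)

noncomputable def bnbPmf (lam r a : ℝ) (y : ℕ) : ℝ :=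
  Real.Gamma ((y : ℝ) + r) / (Real.Gamma ((y : ℝ) + 1) * Real.Gamma r) *
    (betaFn (a + r) ((a - 1) * lam / r + (y : ℝ)) / betaFn a ((a - 1) * lam / r))

noncomputable def digamma (x : ℝ) : ℝ := deriv (fun t => Real.log (Real.Gamma t)) x

theorem differentiableAt_Gamma_of_pos {x : ℝ} (hx : 0 < x) : DifferentiableAt ℝ Real.Gamma x :=
  Real.differentiableAt_Gamma fun m => by
    have : (0 : ℝ) ≤ m := m.cast_nonneg
    linarith

open Set in
theorem digamma_monotoneOn : MonotoneOn digamma (Ioi 0) := by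
  refine Real.convexOn_log_Gamma.monotoneOn_deriv fun x hx => ?_
  exact (differentiableAt_Gamma_of_pos hx).log (Real.Gamma_pos_of_pos hx).ne'

theorem hasDerivAt_log_Gamma {x : ℝ} (hx : 0 < x) :
    HasDerivAt (fun t => Real.log (Real.Gamma t)) (digamma x) x :=
  ((differentiableAt_Gamma_of_pos hx).log (Real.Gamma_pos_of_pos hx).ne').hasDerivAt

theorem digamma_add_one {x : ℝ} (hx : 0 < x) : digamma (x + 1) = digamma x + x⁻¹ := by
  have h₁ : HasDerivAt (fun t => Real.log (Real.Gamma (t + 1))) (digamma (x + 1)) x :=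
    (hasDerivAt_log_Gamma (by positivity : 0 < x + 1)).comp_add_const x 1
  have h₂ := (hasDerivAt_log_Gamma hx).add (Real.hasDerivAt_log hx.ne')
  refine h₁.unique (h₂.congr_of_eventuallyEq ?_)
  filter_upwards [eventually_gt_nhds hx] with t ht
  simp only [Pi.add_apply]
  rw [Real.Gamma_add_one ht.ne', Real.log_mul ht.ne' (Real.Gamma_pos_of_pos ht).ne', add_comm]

theorem digamma_add_natCast_le {x : ℝ} (hx : 0 < x) (n : ℕ) :
    digamma (x + n) ≤ digamma x + n / x := by
  induction n with
  | zero => simp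
  | succ n ih =>
    have hxn : 0 < x + n := by positivity
    have hinv : (x + n)⁻¹ ≤ x⁻¹ := inv_anti₀ hx (by simp)
    push_cast
    rw [← add_assoc, digamma_add_one hxn, add_div, one_div]
    linarith

theorem digamma_le_digamma_add {x s : ℝ} (hx : 0 < x) (hs : 0 ≤ s) :
    digamma x ≤ digamma (x + s) :=
  digamma_monotoneOn hx (add_pos_of_pos_of_nonneg hx hs) (by linarith)

theorem digamma_add_le {x s : ℝ} (hx : 0 < x) (hs : 0 ≤ s) :
    digamma (x + s) ≤ digamma x + (s + 1) / x := by
  have hceil : (⌈s⌉₊ : ℝ) ≤ s + 1 := (Nat.ceil_lt_add_one hs).le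
  calc digamma (x + s) ≤ digamma (x + ⌈s⌉₊) :=
        digamma_monotoneOn (add_pos_of_pos_of_nonneg hx hs)
          (add_pos_of_pos_of_nonneg hx (Nat.cast_nonneg _)) (by gcongr; exact Nat.le_ceil s)
    _ ≤ digamma x + ⌈s⌉₊ / x := digamma_add_natCast_le hx _
    _ ≤ digamma x + (s + 1) / x := by gcongr

theorem log_betaFn {a b : ℝ} (ha : 0 < a) (hb : 0 < b) :
    Real.log (betaFn a b) = Real.log (Real.Gamma a) + Real.log (Real.Gamma b)
      - Real.log (Real.Gamma (a + b)) := by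
  have h₁ := (Real.Gamma_pos_of_pos ha).ne'
  have h₂ := (Real.Gamma_pos_of_pos hb).ne'
  have h₃ := (Real.Gamma_pos_of_pos (add_pos ha hb)).ne'
  rw [betaFn, Real.log_div (mul_ne_zero h₁ h₂) h₃, Real.log_mul h₁ h₂]

theorem betaFn_pos {a b : ℝ} (ha : 0 < a) (hb : 0 < b) : 0 < betaFn a b :=
  div_pos (mul_pos (Real.Gamma_pos_of_pos ha) (Real.Gamma_pos_of_pos hb))
    (Real.Gamma_pos_of_pos (add_pos ha hb))

theorem hasDerivAt_log_betaFn_right {a b : ℝ} (ha : 0 < a) (hb : 0 < b) :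
    HasDerivAt (fun t => Real.log (betaFn a t)) (digamma b - digamma (a + b)) b := by
  have h := ((hasDerivAt_log_Gamma hb).const_add (Real.log (Real.Gamma a))).sub
    ((hasDerivAt_log_Gamma (add_pos ha hb)).comp_const_add a b)
  refine h.congr_of_eventuallyEq ?_
  filter_upwards [eventually_gt_nhds hb] with t ht
  exact log_betaFn ha ht

theorem hasDerivAt_log_bnbPmf {lam r a : ℝ} (hlam : 0 < lam) (hr : 0 < r) (ha : 1 < a) (y : ℕ) :
    HasDerivAt (fun l => Real.log (bnbPmf l r a y))
      ((a - 1) / r * (digamma ((a - 1) / r * lam + y) - digamma ((a - 1) / r * lam + y + a + r)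
        + digamma ((a - 1) / r * lam + a) - digamma ((a - 1) / r * lam))) lam := by
  have hg : 0 < (a - 1) / r := div_pos (by linarith) hr
  have ha₀ : 0 < a := by linarith
  have har : 0 < a + r := by linarith
  have hx : 0 < (a - 1) / r * lam := mul_pos hg hlam
  have hxy : 0 < (a - 1) / r * lam + (y : ℝ) := by positivity
  have hlin : HasDerivAt (fun l => (a - 1) / r * l) ((a - 1) / r) lam := by
    simpa using (hasDerivAt_id lam).const_mul ((a - 1) / r)
  have h₁ := (hasDerivAt_log_betaFn_right har hxy).comp lam (hlin.add_const (y : ℝ))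
  have h₂ := (hasDerivAt_log_betaFn_right ha₀ hx).comp lam hlin
  have h := (h₁.sub h₂).const_add
    (Real.log (Real.Gamma ((y : ℝ) + r) / (Real.Gamma ((y : ℝ) + 1) * Real.Gamma r)))
  refine (h.congr_of_eventuallyEq ?_).congr_deriv ?_
  · filter_upwards [eventually_gt_nhds hlam] with l hl
    have hxl : 0 < (a - 1) / r * l := mul_pos hg hl
    have hb₁ := (betaFn_pos har (by positivity : 0 < (a - 1) / r * l + (y : ℝ))).ne'
    have hb₂ := (betaFn_pos ha₀ hxl).ne'
    have hc : Real.Gamma ((y : ℝ) + r) / (Real.Gamma ((y : ℝ) + 1) * Real.Gamma r) ≠ 0 :=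
      (div_pos (Real.Gamma_pos_of_pos (by positivity)) (mul_pos
        (Real.Gamma_pos_of_pos (by positivity)) (Real.Gamma_pos_of_pos hr))).ne'
    rw [bnbPmf, mul_div_right_comm, Real.log_mul hc (div_ne_zero hb₁ hb₂),
      Real.log_div hb₁ hb₂]
    rfl
  · rw [show a + r + ((a - 1) / r * lam + y) = (a - 1) / r * lam + y + a + r by ring,
      add_comm a ((a - 1) / r * lam)]
    ring

theorem bnb_log_deriv_lam_bound (r a cbar : ℝ) (hr : 0 < r) (ha : 1 < a) (hcbar : 0 < cbar) :
    ∀ lam : ℝ, cbar ≤ lam → ∀ y : ℕ,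
      (0 ≤ ((a - 1) / r) *
          (digamma (((a - 1) / r) * lam + (y : ℝ) + a + r) - digamma (((a - 1) / r) * lam + (y : ℝ)) +
            digamma (((a - 1) / r) * lam + a) - digamma (((a - 1) / r) * lam)) ∧
        ((a - 1) / r) *
            (digamma (((a - 1) / r) * lam + (y : ℝ) + a + r) - digamma (((a - 1) / r) * lam + (y : ℝ)) +
              digamma (((a - 1) / r) * lam + a) - digamma (((a - 1) / r) * lam)) ≤
          (2 * a + 2 + r) / cbar) ∧
      |deriv (fun l => Real.log (bnbPmf l r a y)) lam| ≤ (2 * a + 2 + r) / cbar := by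
  intro lam hlam y
  have hlam₀ : 0 < lam := hcbar.trans_le hlam
  have hg : 0 < (a - 1) / r := div_pos (by linarith) hr
  have hx : 0 < (a - 1) / r * lam := mul_pos hg hlam₀
  have hd := (hasDerivAt_log_bnbPmf hlam₀ hr ha y).deriv
  have hbound : (a - 1) / r * ((2 * a + 2 + r) / ((a - 1) / r * lam)) ≤ (2 * a + 2 + r) / cbar := by
    rw [← mul_div_assoc, mul_div_mul_left _ _ hg.ne']
    gcongr
  rw [hd]
  generalize (a - 1) / r = g at *
  have hxy : 0 < g * lam + (y : ℝ) := by positivity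
  have hA₀ := digamma_le_digamma_add hxy (by linarith : 0 ≤ a + r)
  have hA₁ := digamma_add_le hxy (by linarith : 0 ≤ a + r)
  have hB₀ := digamma_le_digamma_add hx (by linarith : 0 ≤ a)
  have hB₁ := digamma_add_le hx (by linarith : 0 ≤ a)
  have hdiv : (a + r + 1) / (g * lam + y) ≤ (a + r + 1) / (g * lam) := by
    gcongr
    simp
  have hsum : (a + r + 1) / (g * lam) + (a + 1) / (g * lam) = (2 * a + 2 + r) / (g * lam) := by
    ring
  rw [← add_assoc] at hA₀ hA₁
  have hupper := (mul_le_mul_of_nonneg_left (by linarith :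
    digamma (g * lam + y + a + r) - digamma (g * lam + y) + digamma (g * lam + a)
      - digamma (g * lam) ≤ (2 * a + 2 + r) / (g * lam)) hg.le).trans hbound
  refine ⟨⟨mul_nonneg hg.le (by linarith), hupper⟩, ?_⟩
  refine le_trans ?_ hupper
  rw [abs_mul, abs_of_pos hg]
  gcongr
  rw [abs_le]
  constructor <;> linarith
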